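/- (Lemma 1) In the Boolean OR mixture model, fix a monitor index h and assume P(x_h = 0) > 0. Let J₀ = { j : g_{hj} = 0 }, let G′ be the submatrix of G with rows i ≠ h and columns j ∈ J₀, and let x′ = G′ ⊗ (y_j)_{j ∈ J₀}. Then the conditional distribution of (x_i)_{i ≠ h} given x_h = 0 equals the distribution of x′: for every v ∈ {0,1}^{m−1}, P( (x_i)_{i ≠ h} = v | x_h = 0 ) = P( x′ = v ). In particular, the conditional observation vector is itself an OR mixture of the sources not observed by monitor h, with unchanged active probabilities. -/

import Mathlib

/-- Boolean OR mixture: `x i = ⋁_j (g i j ∧ y j)`. -/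
def orMix {ι κ : Type*} [Fintype κ] (G : ι → κ → Bool) (y : κ → Bool) (i : ι) : Bool :=
  decide (∃ j, G i j = true ∧ y j = true)

/-- Weight of a configuration `y` under independent Bernoulli sources with
parameters `p`. -/
noncomputable def bweight {κ : Type*} [Fintype κ] (p : κ → ℝ) (y : κ → Bool) : ℝ :=
  ∏ j, if y j then p j else 1 - p j

open Classical in
/-- Probability of an event `E` under independent Bernoulli sources with
parameters `p`. -/
noncomputable def bprob {κ : Type*} [Fintype κ] [DecidableEq κ] (p : κ → ℝ)
    (E : (κ → Bool) → Prop) : ℝ :=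
  ∑ y : κ → Bool, if E y then bweight p y else 0

/-! The event `x_h = 0` says exactly that every source outside `J₀ = {j | G h j = false}` is
inactive, so it depends only on those sources. On this event the other observations are functions
of the sources in `J₀` alone. The two groups of sources are independent, so conditioning on
`x_h = 0` leaves the law of the sources in `J₀` unchanged. -/

section Bernoulli

variable {κ : Type*} [Fintype κ] (p : κ → ℝ) (q : κ → Prop) [DecidablePred q]

theorem bweight_eq_mul_subtype (y : κ → Bool) :
    bweight p y =
      bweight (fun j : {j // q j} => p j) (fun j => y j) *
        bweight (fun j : {j // ¬ q j} => p j) (fun j => y j) :=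
  (Fintype.prod_subtype_mul_prod_subtype q fun j => if y j then p j else 1 - p j).symm

variable [DecidableEq κ]

theorem bprob_true : bprob p (fun _ => True) = 1 := by
  simp only [bprob, bweight, if_true]
  calc ∑ y : κ → Bool, ∏ j, (if y j then p j else 1 - p j)
      = ∏ j, ∑ b : Bool, (if b then p j else 1 - p j) :=
        (Fintype.prod_sum fun j (b : Bool) => if b then p j else 1 - p j).symm
    _ = 1 := by simp

theorem bprob_and_eq_mul_subtype (A : ({j // q j} → Bool) → Prop)
    (B : ({j // ¬ q j} → Bool) → Prop) :
    bprob p (fun y => A (fun j => y j) ∧ B (fun j => y j)) =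
      bprob (fun j : {j // q j} => p j) A * bprob (fun j : {j // ¬ q j} => p j) B := by
  classical
  simp only [bprob]
  rw [Fintype.sum_mul_sum, ← Fintype.sum_prod_type']
  refine Fintype.sum_equiv (Equiv.piEquivPiSubtypeProd q fun _ => Bool) _ _ fun y => ?_
  simp only [Equiv.piEquivPiSubtypeProd_apply, ite_zero_mul_ite_zero, bweight_eq_mul_subtype p q y]

theorem bprob_and_div_bprob_subtype (A : ({j // q j} → Bool) → Prop)
    (B : ({j // ¬ q j} → Bool) → Prop) (hB : bprob p (fun y => B (fun j => y j)) ≠ 0) :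
    bprob p (fun y => A (fun j => y j) ∧ B (fun j => y j)) / bprob p (fun y => B (fun j => y j)) =
      bprob (fun j : {j // q j} => p j) A := by
  have marginal : bprob p (fun y => B (fun j => y j)) =
      bprob (fun j : {j // ¬ q j} => p j) B := by
    simpa only [true_and, bprob_true, one_mul] using
      bprob_and_eq_mul_subtype p q (fun _ => True) B
  rw [div_eq_iff hB, marginal, bprob_and_eq_mul_subtype]

end Bernoulli

section OrMixture

variable {ι κ : Type*} [Fintype κ] (G : ι → κ → Bool)

theorem orMix_eq_false_iff (y : κ → Bool) (i : ι) :
    orMix G y i = false ↔ ∀ j : {j // ¬ G i j = false}, y j = false := by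
  simp [orMix]

theorem orMix_comp_eq_orMix_subtype {ι' : Type*} (f : ι' → ι) {q : κ → Prop} [DecidablePred q]
    {y : κ → Bool} (hy : ∀ j : {j // ¬ q j}, y j = false) :
    (fun a => orMix G y (f a)) =
      orMix (fun a (j : {j // q j}) => G (f a) j) (fun j => y j) := by
  have active {j : κ} (hj : y j = true) : q j := by
    by_contra hq
    exact Bool.false_ne_true ((hy ⟨j, hq⟩).symm.trans hj)
  funext a
  refine decide_eq_decide.2 ⟨?_, ?_⟩
  · rintro ⟨j, hG, hj⟩
    exact ⟨⟨j, active hj⟩, hG, hj⟩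
  · rintro ⟨j, hG, hj⟩
    exact ⟨j, hG, hj⟩

theorem or_mixture_conditional_on_zero_general [DecidableEq κ] (p : κ → ℝ) (h : ι)
    (hne : bprob p (fun y => orMix G y h = false) ≠ 0) (E : ({i // i ≠ h} → Bool) → Prop) :
    bprob p (fun y => E (fun i => orMix G y i) ∧ orMix G y h = false) /
        bprob p (fun y => orMix G y h = false) =
      bprob (fun j : {j // G h j = false} => p j)
        (fun y' => E (orMix (fun i (j : {j // G h j = false}) => G i j) y')) := by
  have joint (y : κ → Bool) :
      (E (fun i => orMix G y i) ∧ orMix G y h = false) ↔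
        E (orMix (fun i (j : {j // G h j = false}) => G i j) (fun j => y j)) ∧
          ∀ j : {j // ¬ G h j = false}, y j = false := by
    rw [orMix_eq_false_iff]
    exact and_congr_left fun hy => by rw [orMix_comp_eq_orMix_subtype G Subtype.val hy]
  simp only [joint]
  simp only [orMix_eq_false_iff] at hne ⊢
  exact bprob_and_div_bprob_subtype p (fun j => G h j = false)
    (fun y' => E (orMix (fun i (j : {j // G h j = false}) => G i j) y'))
    (fun z => ∀ j, z j = false) hne

end OrMixture

/-- (Lemma 1) Fix a monitor `h` with `P(x_h = 0) > 0`.  The conditional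
distribution of the remaining observations given `x_h = 0` equals the
distribution of the OR mixture `x' = G' ⊗ (y_j)_{j ∈ J₀}` of the sources not
observed by `h` (rows `i ≠ h`), with unchanged active probabilities. -/
theorem or_mixture_conditional_on_zero (m n : ℕ) (G : Fin m → Fin n → Bool)
    (p : Fin n → ℝ) (hp : ∀ j, p j ∈ Set.Icc (0 : ℝ) 1) (h : Fin m)
    (hpos : 0 < bprob p (fun y => orMix G y h = false))
    (v : {i : Fin m // i ≠ h} → Bool) :
    bprob p (fun y =>
        (∀ i : {i : Fin m // i ≠ h}, orMix G y i.1 = v i) ∧ orMix G y h = false)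
      / bprob p (fun y => orMix G y h = false)
      = bprob (fun j : {j : Fin n // G h j = false} => p j.1)
          (fun y' => ∀ i : {i : Fin m // i ≠ h},
            orMix (fun (i : {i : Fin m // i ≠ h}) (j : {j : Fin n // G h j = false})
              => G i.1 j.1) y' i = v i) :=
  or_mixture_conditional_on_zero_general G p h hpos.ne' (fun x => ∀ i, x i = v i)
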